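/- The discriminant of the polynomial A(x) = x^8 - 8w x^6 + 6(2az+3b) x^4 - (4a^3+27b^2) in Q[a,b,z,w][x] equals -2^{32}(4a^3 + 27b^2)^3 · (81z^4a^4 - 108z^3w^2a^3 + 486z^3a^3b - 486z^2w^2a^2b + 18z^2a^5 + 1215z^2a^2b^2 - 108zw^2a^4 - 1458zw^2ab^2 + 54za^4b + 1458zab^3 + 108w^4a^3 + 729w^4b^2 - 162w^2a^3b - 1458w^2b^3 + a^6 + 54a^3b^2 + 729b^4)^2, where the discriminant is computed as (-1)^{28}·Res_x(A, A')/1. -/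

import Mathlib

/-- The Sylvester matrix of `f` (regarded as having degree `m`) and `g`
(regarded as having degree `n`). -/
noncomputable def sylvesterMatrix {R : Type*} [CommRing R] (f g : Polynomial R) (m n : ℕ) :
    Matrix (Fin (n + m)) (Fin (n + m)) R :=
  Matrix.of fun i j =>
    if (i : ℕ) < n then
      (if (i : ℕ) ≤ (j : ℕ) ∧ (j : ℕ) ≤ (i : ℕ) + m then f.coeff (m + i - j) else 0)
    else
      (if (i : ℕ) - n ≤ (j : ℕ) ∧ (j : ℕ) ≤ ((i : ℕ) - n) + n then
        g.coeff (n + ((i : ℕ) - n) - j) else 0)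

/-- The resultant of `f` (degree `m`) and `g` (degree `n`), as the determinant of
their Sylvester matrix. -/
noncomputable def resultant {R : Type*} [CommRing R] (f g : Polynomial R) (m n : ℕ) : R :=
  (sylvesterMatrix f g m n).det

open Polynomial in
lemma resultant_eq_mathlib {R : Type*} [CommRing R] (f g : Polynomial R) :
    _root_.resultant f g 8 7 = Polynomial.resultant f g 8 7 := by
  have h : sylvesterMatrix f g 8 7 =
      ((Polynomial.sylvester f g 8 7).submatrix (Fin.revPerm : Equiv.Perm (Fin 15))
        (Fin.revPerm : Equiv.Perm (Fin 15))).transpose := by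
    ext i j
    have hi : (i : ℕ) < 15 := i.2
    have hj : (j : ℕ) < 15 := j.2
    simp only [sylvesterMatrix, Polynomial.sylvester, Matrix.of_apply, Matrix.transpose_apply,
      Matrix.submatrix_apply, Fin.addCases, Fin.revPerm_apply, Fin.val_rev, Set.mem_Icc,
      eq_rec_constant, Fin.val_subNat, Fin.val_cast, Fin.val_castLT]
    by_cases h7 : (i : ℕ) < 7
    · rw [if_pos h7, dif_neg (by omega)]
      have e : 8 + (i : ℕ) - j = 15 - (j + 1) - (15 - (i + 1) - 8) := by omega
      rw [e]
      refine if_congr ?_ rfl rfl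
      omega
    · rw [if_neg h7, dif_pos (by omega)]
      by_cases hij : (j : ℕ) ≤ i
      · have e : 7 + ((i : ℕ) - 7) - j = 15 - (j + 1) - (15 - (i + 1)) := by omega
        rw [e]
        refine if_congr ?_ rfl rfl
        omega
      · rw [if_neg (by omega), if_neg (by omega)]
  rw [_root_.resultant, h, Matrix.det_transpose]
  exact Matrix.det_submatrix_equiv_self (Fin.revPerm : Equiv.Perm (Fin 15)) _

set_option maxHeartbeats 4000000 in
open Polynomial in
lemma res_small {R : Type*} [CommRing R] (w v r s : R) :
    Polynomial.resultant (C r * X ^ 2 + C s) (X ^ 4 - C (6 * w) * X ^ 2 + C v) 2 4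
      = (s ^ 2 + 6 * w * s * r + v * r ^ 2) ^ 2 := by
  have h : Polynomial.sylvester (C r * X ^ 2 + C s) (X ^ 4 - C (6 * w) * X ^ 2 + C v) 2 4 =
      !![v, 0, s, 0, 0, 0;
         0, v, 0, s, 0, 0;
         -(6 * w), 0, r, 0, s, 0;
         0, -(6 * w), 0, r, 0, s;
         1, 0, 0, 0, r, 0;
         0, 1, 0, 0, 0, r] := by
    ext i j
    fin_cases i <;> fin_cases j <;>
      simp [Polynomial.sylvester, Fin.addCases, coeff_X_pow, coeff_C, -map_mul]
  rw [Polynomial.resultant, h]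
  simp [Matrix.det_succ_row_zero, Fin.sum_univ_succ, Fin.succAbove]
  ring

open Polynomial in
lemma res_main {R : Type*} [CommRing R] [Nontrivial R] (w u d : R) :
    Polynomial.resultant (X ^ 8 - C (8 * w) * X ^ 6 + C (6 * u) * X ^ 4 - C d : R[X])
      (derivative (X ^ 8 - C (8 * w) * X ^ 6 + C (6 * u) * X ^ 4 - C d)) 8 7
      = 8 ^ 8 * (-d) ^ 3 * ((-d - 9 * u ^ 2 + 36 * u * w ^ 2) ^ 2
        + 6 * w * (-d - 9 * u ^ 2 + 36 * u * w ^ 2) * (24 * u * w - 72 * w ^ 3)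
        + 3 * u * (24 * u * w - 72 * w ^ 3) ^ 2) ^ 2 := by
  set A : R[X] := X ^ 8 - C (8 * w) * X ^ 6 + C (6 * u) * X ^ 4 - C d with hA
  set H : R[X] := X ^ 4 - C (6 * w) * X ^ 2 + C (3 * u) with hH
  set r : R[X] := C (24 * u * w - 72 * w ^ 3) * X ^ 2 + C (-d - 9 * u ^ 2 + 36 * u * w ^ 2) with hr
  have hd : derivative A = C 8 * (X ^ 3 * H) := by
    simp only [hA, hH, derivative_sub, derivative_add, derivative_mul, derivative_C,
      derivative_X_pow, derivative_ofNat, map_mul, map_ofNat]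
    push_cast
    ring_nf
    simp only [map_ofNat]
    try ring
  have hAd : A.natDegree ≤ 8 := by rw [hA]; compute_degree
  have hHd : H.natDegree = 4 := by rw [hH]; compute_degree!
  have hrd : r.natDegree ≤ 2 := by rw [hr]; compute_degree
  have hq : A = r + H * (X ^ 4 - C (2 * w) * X ^ 2 + C (3 * u - 12 * w ^ 2)) := by
    simp only [hA, hH, hr, map_mul, map_sub, map_add, map_pow, map_neg, map_ofNat]
    ring
  have hc : A.coeff 0 = -d := by simp [hA]
  have h1 := Polynomial.resultant_mul_right A (X ^ 3) H 8 hAd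
  rw [natDegree_X_pow, hHd, Polynomial.resultant_X_pow_right _ _ _ hAd, hc] at h1
  have h2 : Polynomial.resultant A H 8 4 = Polynomial.resultant r H 8 4 := by
    rw [hq]
    exact Polynomial.resultant_add_mul_left _ _ _ _ _
      (by
        have : (X ^ 4 - C (2 * w) * X ^ 2 + C (3 * u - 12 * w ^ 2) : R[X]).natDegree ≤ 4 := by
          compute_degree
        omega) hHd.le
  have h3 := Polynomial.resultant_add_left_deg r H 2 4 6 hrd
  have hH4 : H.coeff 4 = 1 := by simp [hH, coeff_X_pow, -map_mul]
  have h4 := res_small w (3 * u) (24 * u * w - 72 * w ^ 3) (-d - 9 * u ^ 2 + 36 * u * w ^ 2)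
  rw [← hr, ← hH] at h4
  rw [hH4, h4] at h3
  norm_num at h3 h1
  rw [hd, Polynomial.resultant_C_mul_right, h1, h2, h3]
  ring

open MvPolynomial in
/-- With `a = X 0`, `b = X 1`, `z = X 2`, `w = X 3` in `ℚ[a,b,z,w]`, the discriminant
`(-1)^28 · Res_x(A, A')` of `A(x) = x⁸ - 8wx⁶ + 6(2az+3b)x⁴ - (4a³+27b²)` equals
`-2³²(4a³+27b²)³ · (81z⁴a⁴ - 108z³w²a³ + ⋯ + 729b⁴)²`. -/
theorem discriminant_origami_polynomial :
    (-1 : MvPolynomial (Fin 4) ℚ) ^ 28 *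
      resultant
        ((Polynomial.X ^ 8 - Polynomial.C (8 * X 3) * Polynomial.X ^ 6
            + Polynomial.C (6 * (2 * X 0 * X 2 + 3 * X 1)) * Polynomial.X ^ 4
            - Polynomial.C (4 * (X 0) ^ 3 + 27 * (X 1) ^ 2) :
              Polynomial (MvPolynomial (Fin 4) ℚ)))
        (Polynomial.derivative
          ((Polynomial.X ^ 8 - Polynomial.C (8 * X 3) * Polynomial.X ^ 6
              + Polynomial.C (6 * (2 * X 0 * X 2 + 3 * X 1)) * Polynomial.X ^ 4
              - Polynomial.C (4 * (X 0) ^ 3 + 27 * (X 1) ^ 2) :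
                Polynomial (MvPolynomial (Fin 4) ℚ))))
        8 7
    = -2 ^ 32 * (4 * (X 0) ^ 3 + 27 * (X 1) ^ 2) ^ 3 *
        (81 * (X 2) ^ 4 * (X 0) ^ 4 - 108 * (X 2) ^ 3 * (X 3) ^ 2 * (X 0) ^ 3
          + 486 * (X 2) ^ 3 * (X 0) ^ 3 * X 1 - 486 * (X 2) ^ 2 * (X 3) ^ 2 * (X 0) ^ 2 * X 1
          + 18 * (X 2) ^ 2 * (X 0) ^ 5 + 1215 * (X 2) ^ 2 * (X 0) ^ 2 * (X 1) ^ 2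
          - 108 * X 2 * (X 3) ^ 2 * (X 0) ^ 4 - 1458 * X 2 * (X 3) ^ 2 * X 0 * (X 1) ^ 2
          + 54 * X 2 * (X 0) ^ 4 * X 1 + 1458 * X 2 * X 0 * (X 1) ^ 3
          + 108 * (X 3) ^ 4 * (X 0) ^ 3 + 729 * (X 3) ^ 4 * (X 1) ^ 2
          - 162 * (X 3) ^ 2 * (X 0) ^ 3 * X 1 - 1458 * (X 3) ^ 2 * (X 1) ^ 3
          + (X 0) ^ 6 + 54 * (X 0) ^ 3 * (X 1) ^ 2 + 729 * (X 1) ^ 4) ^ 2 := by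
  rw [resultant_eq_mathlib, res_main]
  ring
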